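/- arXiv:1906.09820 — 3 statements merged into one kernel-verified Lean document; each statement's English description precedes it below -/
import Mathlib

section
/- Let a^i, e^i (i = 1,2,3) be degree-1 elements of Λ, da^i, de^i degree-2 elements of Λ, and α a real number. Define F^i := da^i + (1/2)ε_{ijk}a^j∧a^k, T^i := de^i + ε_{ijk}a^j∧e^k, A_+^i := a^i + α e^i, A_-^i := a^i + (α−1) e^i, dA_+^i := da^i + α·de^i, dA_-^i := da^i + (α−1)·de^i, and F_±^i := dA_±^i + (1/2)ε_{ijk}A_±^j∧A_±^k. Then Σ_i F_-^i∧F_+^i = (((1−α)² + α²)/2)·ε_{ijk} e^i∧e^j∧F^k + (α(1−α)(1−2α)/2)·ε_{ijk} T^i∧e^j∧e^k + α(α−1)·Σ_i T^i∧T^i? No — the full identity reads: Σ_i F_-^i∧F_+^i = (((1−α)²+α²)/2)·Σ_{i,j,k} ε_{ijk} e^i∧e^j∧F^k + (α(1−α)(1−2α)/2)·Σ_{i,j,k} ε_{ijk} T^i∧e^j∧e^k + α(α−1)·Σ_i T^i∧T^i + (2α−1)·Σ_i T^i∧F^i + Σ_i F^i∧F^i. -/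
/-- The Levi-Civita symbol on `{0,1,2}` (totally antisymmetric, `ε 0 1 2 = 1`). -/
noncomputable def eps (i j k : Fin 3) : ℝ :=
  ((j : ℝ) - (i : ℝ)) * ((k : ℝ) - (i : ℝ)) * ((k : ℝ) - (j : ℝ)) / 2

open ExteriorAlgebra

section Helpers

variable {V : Type*} [AddCommGroup V] [Module ℝ V]

/-- The elements of `⋀²V` are central in the exterior algebra. -/
lemma commute_of_mem_exteriorPower_two {x : ExteriorAlgebra ℝ V} (hx : x ∈ ⋀[ℝ]^2 V)
    (y : ExteriorAlgebra ℝ V) : Commute x y := by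
  have swap (v w : V) : ι ℝ v * ι ℝ w = -(ι ℝ w * ι ℝ v) :=
    eq_neg_of_add_eq_zero_left (ι_add_mul_swap v w)
  induction y using ExteriorAlgebra.induction with
  | algebraMap r => exact Algebra.commute_algebraMap_right r x
  | add y z hy hz => exact hy.add_right hz
  | mul y z hy hz => exact hy.mul_right hz
  | ι u =>
    change x ∈ LinearMap.range (ι ℝ : V →ₗ[ℝ] ExteriorAlgebra ℝ V) ^ 2 at hx
    rw [pow_two] at hx
    induction hx using Submodule.mul_induction_on' with
    | mem_mul_mem m hm n hn =>
      obtain ⟨v, rfl⟩ := hm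
      obtain ⟨w, rfl⟩ := hn
      change _ * _ = _ * _
      rw [mul_assoc, swap w u, mul_neg, ← mul_assoc, swap v u, neg_mul, neg_neg, mul_assoc]
    | add m _ n _ hm hn => exact hm.add_left hn

/-- The wedge product `(x × y)^i = ε_{ijk} x^j ∧ y^k` of triples of degree-1 elements. -/
noncomputable def wedgeCross (x y : Fin 3 → V) (i : Fin 3) : ExteriorAlgebra ℝ V :=
  ∑ j : Fin 3, ∑ k : Fin 3, eps i j k • (ι ℝ (x j) * ι ℝ (y k))

lemma wedgeCross_mem (x y : Fin 3 → V) (i : Fin 3) : wedgeCross x y i ∈ ⋀[ℝ]^2 V := by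
  refine Submodule.sum_mem _ fun j _ => Submodule.sum_mem _ fun k _ => Submodule.smul_mem _ _ ?_
  change _ ∈ LinearMap.range (ι ℝ : V →ₗ[ℝ] ExteriorAlgebra ℝ V) ^ 2
  rw [pow_two]
  exact Submodule.mul_mem_mul ⟨_, rfl⟩ ⟨_, rfl⟩

lemma wedgeCross_comm (x y : Fin 3 → V) (i : Fin 3) : wedgeCross x y i = wedgeCross y x i := by
  unfold wedgeCross
  rw [Finset.sum_comm]
  refine Finset.sum_congr rfl fun j _ => Finset.sum_congr rfl fun k _ => ?_
  have h : eps i k j = -eps i j k := by unfold eps; ring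
  rw [h, eq_neg_of_add_eq_zero_left (ι_add_mul_swap (x k) (y j)), neg_smul_neg]

lemma wedgeCross_add_smul_self (x y : Fin 3 → V) (r : ℝ) (i : Fin 3) :
    wedgeCross (fun j => x j + r • y j) (fun j => x j + r • y j) i =
      wedgeCross x x i + (2 * r) • wedgeCross x y i + r ^ 2 • wedgeCross y y i := by
  have h : wedgeCross (fun j => x j + r • y j) (fun j => x j + r • y j) i =
      wedgeCross x x i + r • wedgeCross x y i + r • wedgeCross y x i
        + r ^ 2 • wedgeCross y y i := by
    simp only [wedgeCross, Finset.smul_sum, ← Finset.sum_add_distrib]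
    refine Finset.sum_congr rfl fun j _ => Finset.sum_congr rfl fun k _ => ?_
    simp only [map_add, map_smul, add_mul, mul_add, smul_mul_assoc, mul_smul_comm]
    module
  rw [h, wedgeCross_comm y x]
  module

lemma wedgeCross_self_mul_self (x : Fin 3 → V) (i : Fin 3) :
    wedgeCross x x i * wedgeCross x x i = 0 := by
  have key (v w : V) (r s : ℝ) : (r • (ι ℝ v * ι ℝ w) + s • (ι ℝ w * ι ℝ v)) *
      (r • (ι ℝ v * ι ℝ w) + s • (ι ℝ w * ι ℝ v)) = 0 := by
    have h : ι ℝ v * ι ℝ w * (ι ℝ v * ι ℝ w) = 0 := by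
      rw [mul_assoc, ← mul_assoc (ι ℝ w), eq_neg_of_add_eq_zero_left (ι_add_mul_swap w v),
        neg_mul, mul_assoc, ι_sq_zero, mul_zero, neg_zero, mul_zero]
    rw [eq_neg_of_add_eq_zero_left (ι_add_mul_swap w v), smul_neg, ← sub_eq_add_neg, ← sub_smul,
      smul_mul_smul_comm, h, smul_zero]
  fin_cases i
  · simpa [wedgeCross, Fin.sum_univ_three, eps] using key (x 1) (x 2) (eps 0 1 2) (eps 0 2 1)
  · simpa [wedgeCross, Fin.sum_univ_three, eps] using key (x 0) (x 2) (eps 1 0 2) (eps 1 2 0)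
  · simpa [wedgeCross, Fin.sum_univ_three, eps] using key (x 0) (x 1) (eps 2 0 1) (eps 2 1 0)

lemma sum_eps_smul_mul_right (x y : Fin 3 → V) (G : Fin 3 → ExteriorAlgebra ℝ V) :
    ∑ i : Fin 3, ∑ j : Fin 3, ∑ k : Fin 3, eps i j k • (ι ℝ (x i) * ι ℝ (y j) * G k) =
      ∑ k : Fin 3, wedgeCross x y k * G k := by
  have h (i j k : Fin 3) : eps i j k = eps k i j := by unfold eps; ring
  simp only [wedgeCross, Finset.sum_mul, smul_mul_assoc]
  rw [Finset.sum_comm_cycle]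
  exact Finset.sum_congr rfl fun k _ => Finset.sum_congr rfl fun i _ =>
    Finset.sum_congr rfl fun j _ => by rw [h]

lemma sum_eps_smul_mul_left (x y : Fin 3 → V) (G : Fin 3 → ExteriorAlgebra ℝ V) :
    ∑ i : Fin 3, ∑ j : Fin 3, ∑ k : Fin 3, eps i j k • (G i * ι ℝ (x j) * ι ℝ (y k)) =
      ∑ i : Fin 3, G i * wedgeCross x y i := by
  simp only [wedgeCross, Finset.mul_sum, mul_smul_comm, mul_assoc]

end Helpers


/-- decomposition of the two-connection Pontryagin-type Lagrangian
`Σ_i F_-^i∧F_+^i` into Husain–Kuchař, torsion and Pontryagin terms: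
`Σ_i F_-^i∧F_+^i = (((1−α)²+α²)/2)·ε_{ijk} e^i∧e^j∧F^k
  + (α(1−α)(1−2α)/2)·ε_{ijk} T^i∧e^j∧e^k + α(α−1)·Σ_i T^i∧T^i
  + (2α−1)·Σ_i T^i∧F^i + Σ_i F^i∧F^i`,
where `A_±^i = a^i + αe^i, a^i + (α−1)e^i`. -/
theorem statement6 {V : Type*} [AddCommGroup V] [Module ℝ V]
    (a e : Fin 3 → V) (da de : Fin 3 → ExteriorAlgebra ℝ V)
    (hda : ∀ i, da i ∈ ⋀[ℝ]^2 V) (hde : ∀ i, de i ∈ ⋀[ℝ]^2 V) (α : ℝ)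
    (F T : Fin 3 → ExteriorAlgebra ℝ V)
    (hF : ∀ i, F i = da i + (1 / 2 : ℝ) •
      ∑ j : Fin 3, ∑ k : Fin 3, eps i j k • (ι ℝ (a j) * ι ℝ (a k)))
    (hT : ∀ i, T i = de i +
      ∑ j : Fin 3, ∑ k : Fin 3, eps i j k • (ι ℝ (a j) * ι ℝ (e k)))
    (Ap Am : Fin 3 → V)
    (hAp : ∀ i, Ap i = a i + α • e i) (hAm : ∀ i, Am i = a i + (α - 1) • e i)
    (dAp dAm : Fin 3 → ExteriorAlgebra ℝ V)
    (hdAp : ∀ i, dAp i = da i + α • de i) (hdAm : ∀ i, dAm i = da i + (α - 1) • de i)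
    (Fp Fm : Fin 3 → ExteriorAlgebra ℝ V)
    (hFp : ∀ i, Fp i = dAp i + (1 / 2 : ℝ) •
      ∑ j : Fin 3, ∑ k : Fin 3, eps i j k • (ι ℝ (Ap j) * ι ℝ (Ap k)))
    (hFm : ∀ i, Fm i = dAm i + (1 / 2 : ℝ) •
      ∑ j : Fin 3, ∑ k : Fin 3, eps i j k • (ι ℝ (Am j) * ι ℝ (Am k))) :
    ∑ i : Fin 3, Fm i * Fp i
      = (((1 - α) ^ 2 + α ^ 2) / 2) •
          ∑ i : Fin 3, ∑ j : Fin 3, ∑ k : Fin 3,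
            eps i j k • (ι ℝ (e i) * ι ℝ (e j) * F k)
        + ((α * (1 - α) * (1 - 2 * α)) / 2) •
          ∑ i : Fin 3, ∑ j : Fin 3, ∑ k : Fin 3,
            eps i j k • (T i * ι ℝ (e j) * ι ℝ (e k))
        + (α * (α - 1)) • ∑ i : Fin 3, T i * T i
        + (2 * α - 1) • ∑ i : Fin 3, T i * F i
        + ∑ i : Fin 3, F i * F i := by
  set E := wedgeCross e e with hE
  have hF' (i : Fin 3) : F i = da i + (1 / 2 : ℝ) • wedgeCross a a i := hF i
  have hT' (i : Fin 3) : T i = de i + wedgeCross a e i := hT i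
  have curvature (r : ℝ) (i : Fin 3) :
      da i + r • de i + (1 / 2 : ℝ) •
        wedgeCross (fun j => a j + r • e j) (fun j => a j + r • e j) i =
      F i + r • T i + (r ^ 2 / 2) • E i := by
    rw [wedgeCross_add_smul_self, hF', hT']
    module
  have hFp' (i : Fin 3) : Fp i = F i + α • T i + (α ^ 2 / 2) • E i := by
    rw [hFp, hdAp, ← curvature, ← funext hAp]
    rfl
  have hFm' (i : Fin 3) : Fm i = F i + (α - 1) • T i + ((α - 1) ^ 2 / 2) • E i := by
    rw [hFm, hdAm, ← curvature, ← funext hAm]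
    rfl
  have hTmem (i : Fin 3) : T i ∈ ⋀[ℝ]^2 V :=
    hT' i ▸ Submodule.add_mem _ (hde i) (wedgeCross_mem a e i)
  rw [sum_eps_smul_mul_right, sum_eps_smul_mul_left]
  simp only [Finset.smul_sum, ← Finset.sum_add_distrib]
  refine Finset.sum_congr rfl fun i _ => ?_
  have hEE : E i * E i = 0 := wedgeCross_self_mul_self e i
  have hFT : F i * T i = T i * F i := (commute_of_mem_exteriorPower_two (hTmem i) _).eq.symm
  have hFE : F i * E i = E i * F i :=
    (commute_of_mem_exteriorPower_two (wedgeCross_mem e e i) _).eq.symm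
  have hET : E i * T i = T i * E i :=
    (commute_of_mem_exteriorPower_two (wedgeCross_mem e e i) _).eq
  rw [hFm', hFp', ← hE]
  simp only [add_mul, mul_add, smul_mul_assoc, mul_smul_comm, hEE, hFT, hFE, hET, smul_zero]
  module
end

section
/- Let a^i, e^i (i = 1,2,3) be degree-1 elements of Λ, da^i, de^i degree-2 elements of Λ, and α a real number. Define F^i := da^i + (1/2)ε_{ijk}a^j∧a^k, T^i := de^i + ε_{ijk}a^j∧e^k, A_+^i := a^i + α e^i, A_-^i := a^i + (α−1) e^i, dA_+^i := da^i + α·de^i, dA_-^i := da^i + (α−1)·de^i, and F_±^i := dA_±^i + (1/2)ε_{ijk}A_±^j∧A_±^k. Then F_+^i = 0 and F_-^i = 0 for all i if and only if, for all i, T^i = ((1−2α)/2)·Σ_{j,k} ε_{ijk} e^j∧e^k and F^i = (α(α−1)/2)·Σ_{j,k} ε_{ijk} e^j∧e^k. (Flatness of both connections at the boundary is equivalent to the boundary field equations for A and e.) -/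
open ExteriorAlgebra

/-- The Levi-Civita symbol is antisymmetric in its last two indices. -/
theorem eps_swap (i j k : Fin 3) : eps i k j = -eps i j k := by
  unfold eps
  ring

/-- The contraction of the Levi-Civita symbol with a wedge product of vectors is symmetric. -/
theorem sum_eps_smul_ι_mul_ι_comm {V : Type*} [AddCommGroup V] [Module ℝ V]
    (x y : Fin 3 → V) (i : Fin 3) :
    ∑ j : Fin 3, ∑ k : Fin 3, eps i j k • (ι ℝ (y j) * ι ℝ (x k)) =
      ∑ j : Fin 3, ∑ k : Fin 3, eps i j k • (ι ℝ (x j) * ι ℝ (y k)) := by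
  rw [Finset.sum_comm]
  refine Finset.sum_congr rfl fun j _ => Finset.sum_congr rfl fun k _ => ?_
  rw [eps_swap, eq_neg_of_add_eq_zero_left (ι_add_mul_swap (R := ℝ) (y k) (x j)),
    neg_smul, smul_neg, neg_neg]

/-- The quadratic part of the curvature of the shifted connection `a + β e`. -/
theorem sum_eps_smul_ι_add_smul {V : Type*} [AddCommGroup V] [Module ℝ V]
    (a e : Fin 3 → V) (β : ℝ) (i : Fin 3) :
    ∑ j : Fin 3, ∑ k : Fin 3, eps i j k • (ι ℝ (a j + β • e j) * ι ℝ (a k + β • e k)) =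
      ∑ j : Fin 3, ∑ k : Fin 3, eps i j k • (ι ℝ (a j) * ι ℝ (a k)) +
        (2 * β) • ∑ j : Fin 3, ∑ k : Fin 3, eps i j k • (ι ℝ (a j) * ι ℝ (e k)) +
        β ^ 2 • ∑ j : Fin 3, ∑ k : Fin 3, eps i j k • (ι ℝ (e j) * ι ℝ (e k)) := by
  rw [two_mul, add_smul]
  nth_rewrite 2 [← sum_eps_smul_ι_mul_ι_comm a e i]
  simp only [Finset.smul_sum, ← Finset.sum_add_distrib]
  refine Finset.sum_congr rfl fun j _ => Finset.sum_congr rfl fun k _ => ?_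
  simp only [map_add, map_smul, add_mul, mul_add, smul_mul_assoc, mul_smul_comm]
  module

/-- flatness of both shifted connections `A_± = a + αe, a + (α−1)e`
is equivalent to the boundary field equations
`T^i = ((1−2α)/2)·ε_{ijk}e^j∧e^k` and `F^i = (α(α−1)/2)·ε_{ijk}e^j∧e^k`. -/
theorem statement7 {V : Type*} [AddCommGroup V] [Module ℝ V]
    (a e : Fin 3 → V) (da de : Fin 3 → ExteriorAlgebra ℝ V)
    (hda : ∀ i, da i ∈ ⋀[ℝ]^2 V) (hde : ∀ i, de i ∈ ⋀[ℝ]^2 V) (α : ℝ)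
    (F T : Fin 3 → ExteriorAlgebra ℝ V)
    (hF : ∀ i, F i = da i + (1 / 2 : ℝ) •
      ∑ j : Fin 3, ∑ k : Fin 3, eps i j k • (ι ℝ (a j) * ι ℝ (a k)))
    (hT : ∀ i, T i = de i +
      ∑ j : Fin 3, ∑ k : Fin 3, eps i j k • (ι ℝ (a j) * ι ℝ (e k)))
    (Ap Am : Fin 3 → V)
    (hAp : ∀ i, Ap i = a i + α • e i) (hAm : ∀ i, Am i = a i + (α - 1) • e i)
    (dAp dAm : Fin 3 → ExteriorAlgebra ℝ V)
    (hdAp : ∀ i, dAp i = da i + α • de i) (hdAm : ∀ i, dAm i = da i + (α - 1) • de i)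
    (Fp Fm : Fin 3 → ExteriorAlgebra ℝ V)
    (hFp : ∀ i, Fp i = dAp i + (1 / 2 : ℝ) •
      ∑ j : Fin 3, ∑ k : Fin 3, eps i j k • (ι ℝ (Ap j) * ι ℝ (Ap k)))
    (hFm : ∀ i, Fm i = dAm i + (1 / 2 : ℝ) •
      ∑ j : Fin 3, ∑ k : Fin 3, eps i j k • (ι ℝ (Am j) * ι ℝ (Am k))) :
    ((∀ i, Fp i = 0) ∧ (∀ i, Fm i = 0)) ↔
      ∀ i, T i = ((1 - 2 * α) / 2) •
          ∑ j : Fin 3, ∑ k : Fin 3, eps i j k • (ι ℝ (e j) * ι ℝ (e k)) ∧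
        F i = ((α * (α - 1)) / 2) •
          ∑ j : Fin 3, ∑ k : Fin 3, eps i j k • (ι ℝ (e j) * ι ℝ (e k)) := by
  have hFp' : ∀ i, Fp i = F i + α • T i + (α ^ 2 / 2) •
      ∑ j : Fin 3, ∑ k : Fin 3, eps i j k • (ι ℝ (e j) * ι ℝ (e k)) := fun i => by
    simp only [hFp, hdAp, hAp, hF, hT, sum_eps_smul_ι_add_smul]
    module
  have hFm' : ∀ i, Fm i = F i + (α - 1) • T i + ((α - 1) ^ 2 / 2) •
      ∑ j : Fin 3, ∑ k : Fin 3, eps i j k • (ι ℝ (e j) * ι ℝ (e k)) := fun i => by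
    simp only [hFm, hdAm, hAm, hF, hT, sum_eps_smul_ι_add_smul]
    module
  rw [← forall_and]
  refine forall_congr' fun i => ?_
  rw [hFp', hFm']
  generalize ∑ j : Fin 3, ∑ k : Fin 3, eps i j k • (ι ℝ (e j) * ι ℝ (e k)) = E
  constructor
  · rintro ⟨hp, hm⟩
    constructor
    · linear_combination (norm := module) hp - hm
    · linear_combination (norm := module) (1 - α) • hp + α • hm
  · rintro ⟨hT', hF'⟩
    rw [hT', hF']
    constructor <;> module
end

section
/- Let α₁, α₂, α₃, α₄, α₅ be real numbers with 4α₂α₃ − α₅² ≠ 0 and 2α₃α₄ − α₁α₅ = 0, let M be a real vector space and u, X, Y ∈ M satisfying 2α₂·X + α₄·u + α₅·Y = 0 and α₁·u + 2α₃·Y + α₅·X = 0. Then X = 0 and Y + (Λ/2)·u = 0, where Λ = (4α₁α₂ − 2α₄α₅)/(4α₂α₃ − α₅²). (With X = De_i, Y = F_i, u = ε_{ijk}e^j∧e^k these are the torsion-free equations of 3-dimensional Euclidean general relativity with cosmological constant Λ.) -/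
/-- for `4α₂α₃ − α₅² ≠ 0` and `2α₃α₄ − α₁α₅ = 0`, the boundary field
equations imply `X = 0` and `Y + (Λ/2)·u = 0` with
`Λ = (4α₁α₂ − 2α₄α₅)/(4α₂α₃ − α₅²)` (torsion-free 3-dimensional Euclidean GR with
cosmological constant `Λ`). -/
theorem statement10 (α₁ α₂ α₃ α₄ α₅ : ℝ) (h : 4 * α₂ * α₃ - α₅ ^ 2 ≠ 0)
    (h' : 2 * α₃ * α₄ - α₁ * α₅ = 0)
    {M : Type*} [AddCommGroup M] [Module ℝ M] (u X Y : M)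
    (h1 : (2 * α₂) • X + α₄ • u + α₅ • Y = 0)
    (h2 : α₁ • u + (2 * α₃) • Y + α₅ • X = 0) :
    X = 0 ∧
      Y + (((4 * α₁ * α₂ - 2 * α₄ * α₅) / (4 * α₂ * α₃ - α₅ ^ 2)) / 2) • u = 0 := by
  have hX : (4 * α₂ * α₃ - α₅ ^ 2) • X + (2 * α₃ * α₄ - α₁ * α₅) • u = 0 := by
    linear_combination (norm := module) (2 * α₃) • h1 - α₅ • h2
  have hY : (4 * α₂ * α₃ - α₅ ^ 2) • Y + (2 * α₁ * α₂ - α₄ * α₅) • u = 0 := by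
    linear_combination (norm := module) (2 * α₂) • h2 - α₅ • h1
  rw [h', zero_smul, add_zero] at hX
  refine ⟨(smul_eq_zero.mp hX).resolve_left h, (smul_eq_zero.mp ?_).resolve_left h⟩
  rw [smul_add, smul_smul, ← hY]
  congr 2
  field_simp
  ring
end
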